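/- arXiv:1606.08974 — 3 statements merged into one kernel-verified Lean document; each statement's English description precedes it below -/
import Mathlib

section
/- Let n ≥ 2, θ > 0, and let X_1,…,X_n be i.i.d. Uniform[0,θ] random variables. Then n·τ_n − 1 = Σ_{i=1}^{n−1} X_(i)/X_(n) has the same distribution as the sum of n−1 independent Uniform[0,1] random variables (the Irwin–Hall distribution with parameter n−1), where τ_n = X̄_n / X_(n), X̄_n = (1/n)·Σ_{i=1}^n X_i, X_(n) = max{X_1,…,X_n}, and X_(1) ≤ … ≤ X_(n) are the order statistics. -/
open MeasureTheory ProbabilityTheory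

/-- The uniform probability measure on `[0, θ]`. -/
noncomputable def uniformMeasure (θ : ℝ) : Measure ℝ :=
  ENNReal.ofReal θ⁻¹ • volume.restrict (Set.Icc 0 θ)

/-- The joint law of an i.i.d. sample of size `n` from `Uniform[0, θ]`. -/
noncomputable def iidUniform (n : ℕ) (θ : ℝ) : Measure (Fin n → ℝ) :=
  Measure.pi fun _ => uniformMeasure θ

/-- Sample maximum. -/
noncomputable def sampleMax {n : ℕ} (x : Fin n → ℝ) : ℝ := ⨆ i, x i

/-- Empirical mean. -/
noncomputable def sampleMean {n : ℕ} (x : Fin n → ℝ) : ℝ := (∑ i, x i) / n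

/-- The mean/max statistic `τ_n`. -/
noncomputable def tau {n : ℕ} (x : Fin n → ℝ) : ℝ := sampleMean x / sampleMax x

/-- The order statistics of a sample: the sample rearranged in nondecreasing order. -/
noncomputable def sortedVec {n : ℕ} (x : Fin n → ℝ) : Fin n → ℝ := x ∘ Tuple.sort x

/-- The Irwin–Hall distribution with parameter `m`: the law of the sum of `m`
independent `Uniform[0,1]` random variables. -/
noncomputable def irwinHall (m : ℕ) : Measure ℝ :=
  (iidUniform m 1).map fun u => ∑ i, u i

theorem isProbabilityMeasure_uniformMeasure {θ : ℝ} (hθ : 0 < θ) :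
    IsProbabilityMeasure (uniformMeasure θ) := by
  constructor
  simp [uniformMeasure, ← ENNReal.ofReal_mul (inv_nonneg.2 hθ.le), inv_mul_cancel₀ hθ.ne']

theorem isProbabilityMeasure_iidUniform (n : ℕ) {θ : ℝ} (hθ : 0 < θ) :
    IsProbabilityMeasure (iidUniform n θ) := by
  have := isProbabilityMeasure_uniformMeasure hθ
  unfold iidUniform
  infer_instance

theorem iidUniform_eq_smul_restrict (n : ℕ) {θ : ℝ} (hθ : 0 < θ) :
    iidUniform n θ =
      ENNReal.ofReal θ⁻¹ ^ n • volume.restrict (Set.Icc (0 : Fin n → ℝ) fun _ => θ) := by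
  have := isProbabilityMeasure_uniformMeasure hθ
  refine Measure.pi_eq fun s hs => ?_
  have hbox : (Set.univ.pi s) ∩ Set.Icc (0 : Fin n → ℝ) (fun _ => θ) =
      Set.univ.pi fun i => s i ∩ Set.Icc 0 θ := by
    rw [← Set.pi_univ_Icc, ← Set.pi_inter_distrib]
    rfl
  simp only [uniformMeasure, Measure.smul_apply, smul_eq_mul]
  rw [Measure.restrict_apply (MeasurableSet.univ_pi hs), hbox, volume_pi_pi,
    Finset.prod_mul_distrib]
  simp [Measure.restrict_apply (hs _)]

theorem measurable_tau (n : ℕ) : Measurable (tau : (Fin n → ℝ) → ℝ) := by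
  have hmax : Measurable (sampleMax : (Fin n → ℝ) → ℝ) :=
    Measurable.iSup fun i => measurable_pi_apply i
  have hmean : Measurable (sampleMean : (Fin n → ℝ) → ℝ) := by
    unfold sampleMean
    fun_prop
  exact hmean.div hmax

theorem sampleMax_eq_of_forall_le {n : ℕ} {x : Fin n → ℝ} {k : Fin n} (h : ∀ i, x i ≤ x k) :
    sampleMax x = x k :=
  haveI : Nonempty (Fin n) := ⟨k⟩
  le_antisymm (ciSup_le h) (le_ciSup (Set.finite_range x).bddAbove k)

theorem mul_tau_sub_one {m : ℕ} {x : Fin (m + 1) → ℝ} (h : sampleMax x ≠ 0) :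
    ((m + 1 : ℕ) : ℝ) * tau x - 1 = (∑ i, x i - sampleMax x) / sampleMax x := by
  have : ((m + 1 : ℕ) : ℝ) ≠ 0 := by positivity
  unfold tau sampleMean
  field_simp

theorem mul_tau_insertNth_sub_one {m : ℕ} (k : Fin (m + 1)) {t : ℝ} (ht : t ≠ 0) {y : Fin m → ℝ}
    (h : ∀ i, y i ≤ t) :
    ((m + 1 : ℕ) : ℝ) * tau (k.insertNth t y : Fin (m + 1) → ℝ) - 1 = ∑ i, t⁻¹ * y i := by
  have hmax : sampleMax (k.insertNth t y : Fin (m + 1) → ℝ) = t := by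
    rw [sampleMax_eq_of_forall_le (k := k)]
    · simp
    · simpa [Fin.forall_iff_succAbove k] using h
  rw [mul_tau_sub_one (by rwa [hmax]), hmax, Fin.sum_univ_succAbove _ k, ← Finset.mul_sum]
  simp only [Fin.insertNth_apply_same, Fin.insertNth_apply_succAbove]
  field_simp
  ring

/-- The points of the cube `[0, θ]^n` whose `k`-th coordinate is maximal. -/
def argmaxCell {n : ℕ} (θ : ℝ) (k : Fin n) : Set (Fin n → ℝ) :=
  {x | x ∈ Set.Icc 0 (fun _ => θ) ∧ ∀ i, x i ≤ x k}

theorem measurableSet_argmaxCell {n : ℕ} (θ : ℝ) (k : Fin n) :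
    MeasurableSet (argmaxCell θ k) := by
  have h : MeasurableSet {x : Fin n → ℝ | ∀ i, x i ≤ x k} := by
    rw [Set.ofPred_forall]
    exact MeasurableSet.iInter fun i =>
      measurableSet_le (measurable_pi_apply i) (measurable_pi_apply k)
  exact measurableSet_Icc.inter h

theorem iUnion_argmaxCell (m : ℕ) (θ : ℝ) :
    ⋃ k : Fin (m + 1), argmaxCell θ k = Set.Icc 0 fun _ => θ := by
  ext x
  obtain ⟨k, hk⟩ := Finite.exists_max x
  simp only [Set.mem_iUnion, argmaxCell, Set.mem_ofPred_eq]
  exact ⟨fun ⟨_, h⟩ => h.1, fun h => ⟨k, h, hk⟩⟩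

theorem volume_setOf_apply_eq_apply {n : ℕ} {i j : Fin n} (hij : i ≠ j) :
    volume {x : Fin n → ℝ | x i = x j} = 0 := by
  let L : (Fin n → ℝ) →ₗ[ℝ] ℝ :=
    LinearMap.proj (R := ℝ) (φ := fun _ => ℝ) i - LinearMap.proj j
  have hL : LinearMap.ker L ≠ ⊤ := by
    rw [Ne, LinearMap.ker_eq_top]
    intro h
    have := LinearMap.congr_fun h (Pi.single i 1)
    simp [L, hij.symm] at this
  convert Measure.addHaar_submodule volume _ hL using 2
  ext x
  simp [L, sub_eq_zero]

theorem pairwise_aedisjoint_argmaxCell (n : ℕ) (θ : ℝ) :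
    Pairwise (Function.onFun (AEDisjoint volume) (argmaxCell θ : Fin n → Set (Fin n → ℝ))) :=
  fun _ _ hij => measure_mono_null (fun _ hx => le_antisymm (hx.2.2 _) (hx.1.2 _))
    (volume_setOf_apply_eq_apply hij)

theorem lintegral_comp_inv_smul {m : ℕ} {t : ℝ} (ht : 0 < t) {g : (Fin m → ℝ) → ENNReal}
    (hg : Measurable g) :
    ∫⁻ y, g (t⁻¹ • y) = ENNReal.ofReal (t ^ m) * ∫⁻ y, g y := by
  rw [← lintegral_map hg (measurable_const_smul t⁻¹),
    Measure.map_addHaar_smul volume (inv_ne_zero ht.ne'), lintegral_smul_measure]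
  simp [abs_of_pos ht]

theorem insertNth_mem_argmaxCell {m : ℕ} {θ t : ℝ} (k : Fin (m + 1)) (ht : 0 < t) (y : Fin m → ℝ) :
    (k.insertNth t y : Fin (m + 1) → ℝ) ∈ argmaxCell θ k ↔
      t ≤ θ ∧ t⁻¹ • y ∈ Set.Icc (0 : Fin m → ℝ) 1 := by
  have h0 : ∀ i, 0 ≤ t⁻¹ * y i ↔ 0 ≤ y i := fun i => mul_nonneg_iff_of_pos_left (inv_pos.2 ht)
  have h1 : ∀ i, t⁻¹ * y i ≤ 1 ↔ y i ≤ t := fun i => by rw [inv_mul_le_iff₀ ht, mul_one]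
  simp only [argmaxCell, Set.mem_ofPred_eq, Set.mem_Icc, Pi.le_def, Fin.forall_iff_succAbove k,
    Fin.insertNth_apply_same, Fin.insertNth_apply_succAbove, Pi.smul_apply, smul_eq_mul,
    Pi.zero_apply, Pi.one_apply, h0, h1]
  constructor
  · rintro ⟨⟨⟨_, h⟩, h', _⟩, _, h''⟩
    exact ⟨h', h, h''⟩
  · rintro ⟨h, h', h''⟩
    exact ⟨⟨⟨ht.le, h'⟩, h, fun i => (h'' i).trans h⟩, le_rfl, h''⟩

theorem setLIntegral_argmaxCell {m : ℕ} (θ : ℝ) (k : Fin (m + 1)) {f : ℝ → ENNReal}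
    (hf : Measurable f) :
    ∫⁻ x in argmaxCell θ k, f (((m + 1 : ℕ) : ℝ) * tau x - 1) =
      (∫⁻ t in Set.Ioc 0 θ, ENNReal.ofReal (t ^ m)) *
        ∫⁻ u in Set.Icc (0 : Fin m → ℝ) 1, f (∑ i, u i) := by
  let F : (Fin (m + 1) → ℝ) → ENNReal :=
    (argmaxCell θ k).indicator fun x => f (((m + 1 : ℕ) : ℝ) * tau x - 1)
  let g : (Fin m → ℝ) → ENNReal := (Set.Icc (0 : Fin m → ℝ) 1).indicator fun u => f (∑ i, u i)
  have hF : Measurable F :=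
    (hf.comp (((measurable_tau _).const_mul _).sub_const _)).indicator
      (measurableSet_argmaxCell θ k)
  have hg : Measurable g := (hf.comp (by fun_prop)).indicator measurableSet_Icc
  have he := (volume_preserving_piFinSuccAbove (fun _ : Fin (m + 1) => ℝ) k).symm
  have hslice : ∀ᵐ t : ℝ, ∫⁻ y : Fin m → ℝ, F (k.insertNth t y) =
      (Set.Ioc 0 θ).indicator (fun t => ENNReal.ofReal (t ^ m)) t * ∫⁻ u, g u := by
    filter_upwards [Measure.ae_ne volume (0 : ℝ)] with t ht0
    by_cases ht : t ∈ Set.Ioc 0 θ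
    · rw [Set.indicator_of_mem ht, ← lintegral_comp_inv_smul ht.1 hg]
      refine lintegral_congr fun y => ?_
      have hiff := insertNth_mem_argmaxCell (θ := θ) k ht.1 y
      by_cases hy : t⁻¹ • y ∈ Set.Icc (0 : Fin m → ℝ) 1
      · have hyt : ∀ i, y i ≤ t := fun i => by
          have := hy.2 i
          simpa [inv_mul_le_iff₀ ht.1] using this
        simp only [F, g]
        rw [Set.indicator_of_mem (hiff.2 ⟨ht.2, hy⟩), Set.indicator_of_mem hy,
          mul_tau_insertNth_sub_one k ht0 hyt]
        rfl
      · simp only [F, g]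
        rw [Set.indicator_of_notMem (fun h => hy (hiff.1 h).2), Set.indicator_of_notMem hy]
    · rw [Set.indicator_of_notMem ht, zero_mul]
      refine (lintegral_congr fun y => ?_).trans lintegral_zero
      refine Set.indicator_of_notMem (fun h => ht ⟨?_, ?_⟩) _
      · exact lt_of_le_of_ne (by simpa using h.1.1 k) ht0.symm
      · simpa using h.1.2 k
  calc ∫⁻ x in argmaxCell θ k, f (((m + 1 : ℕ) : ℝ) * tau x - 1)
      = ∫⁻ x, F x := (lintegral_indicator (measurableSet_argmaxCell θ k) _).symm
    _ = ∫⁻ p : ℝ × (Fin m → ℝ), F (k.insertNth p.1 p.2) := (he.lintegral_comp hF).symm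
    _ = ∫⁻ t : ℝ, ∫⁻ y : Fin m → ℝ, F (k.insertNth t y) :=
        lintegral_prod _ (hF.comp he.measurable).aemeasurable
    _ = ∫⁻ t, (Set.Ioc 0 θ).indicator (fun t => ENNReal.ofReal (t ^ m)) t * ∫⁻ u, g u :=
        lintegral_congr_ae hslice
    _ = _ := by
        rw [lintegral_mul_const _ (Measurable.indicator (by fun_prop) measurableSet_Ioc),
          lintegral_indicator measurableSet_Ioc, lintegral_indicator measurableSet_Icc]

theorem irwinHall_eq_map_restrict (m : ℕ) :
    irwinHall m =
      (volume.restrict (Set.Icc (0 : Fin m → ℝ) 1)).map fun u => ∑ i, u i := by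
  rw [irwinHall, iidUniform_eq_smul_restrict m one_pos]
  simp only [inv_one, ENNReal.ofReal_one, one_pow, one_smul]
  rfl

theorem isProbabilityMeasure_irwinHall (m : ℕ) : IsProbabilityMeasure (irwinHall m) :=
  haveI := isProbabilityMeasure_iidUniform m one_pos
  Measure.isProbabilityMeasure_map (by fun_prop)

theorem exists_map_tau_eq_smul_irwinHall (m : ℕ) {θ : ℝ} (hθ : 0 < θ) :
    ∃ c : ENNReal, (iidUniform (m + 1) θ).map (fun x => ((m + 1 : ℕ) : ℝ) * tau x - 1) =
      c • irwinHall m := by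
  refine ⟨ENNReal.ofReal θ⁻¹ ^ (m + 1) *
    ∑' _ : Fin (m + 1), ∫⁻ t in Set.Ioc 0 θ, ENNReal.ofReal (t ^ m), ?_⟩
  refine Measure.ext_of_lintegral _ fun f hf => ?_
  rw [lintegral_map hf (((measurable_tau _).const_mul _).sub_const _), lintegral_smul_measure,
    irwinHall_eq_map_restrict, lintegral_map hf (by fun_prop),
    iidUniform_eq_smul_restrict _ hθ, lintegral_smul_measure, ← iUnion_argmaxCell,
    lintegral_iUnion₀ (fun k => (measurableSet_argmaxCell θ k).nullMeasurableSet)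
      (pairwise_aedisjoint_argmaxCell _ θ)]
  simp only [setLIntegral_argmaxCell θ _ hf, ENNReal.tsum_mul_right, smul_eq_mul, mul_assoc]

theorem map_tau_eq_irwinHall (m : ℕ) {θ : ℝ} (hθ : 0 < θ) :
    (iidUniform (m + 1) θ).map (fun x => ((m + 1 : ℕ) : ℝ) * tau x - 1) = irwinHall m := by
  obtain ⟨c, hc⟩ := exists_map_tau_eq_smul_irwinHall m hθ
  have := isProbabilityMeasure_iidUniform (m + 1) hθ
  have := isProbabilityMeasure_irwinHall m
  have hprob : IsProbabilityMeasure
      ((iidUniform (m + 1) θ).map (fun x => ((m + 1 : ℕ) : ℝ) * tau x - 1)) :=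
    Measure.isProbabilityMeasure_map
      (((measurable_tau _).const_mul _).sub_const _).aemeasurable
  have hone := hprob.measure_univ
  rw [hc, Measure.smul_apply, measure_univ, smul_eq_mul, mul_one] at hone
  rw [hc, hone, one_smul]

theorem sampleMax_eq_sortedVec_last {m : ℕ} (x : Fin (m + 1) → ℝ) :
    sampleMax x = sortedVec x (Fin.last m) := by
  refine sampleMax_eq_of_forall_le fun i => ?_
  simpa using Tuple.monotone_sort x (Fin.le_last ((Tuple.sort x).symm i))

theorem mul_tau_sub_one_eq_sum_sortedVec {m : ℕ} {x : Fin (m + 1) → ℝ} (h : sampleMax x ≠ 0) :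
    ((m + 1 : ℕ) : ℝ) * tau x - 1 =
      ∑ i : Fin m, sortedVec x i.castSucc / sortedVec x (Fin.last m) := by
  have hsum : ∑ i, x i = ∑ i, sortedVec x i := (Equiv.sum_comp (Tuple.sort x) x).symm
  rw [mul_tau_sub_one h, hsum, Fin.sum_univ_castSucc, sampleMax_eq_sortedVec_last,
    add_sub_cancel_right, Finset.sum_div]

theorem ae_sampleMax_ne_zero (m : ℕ) {θ : ℝ} (hθ : 0 < θ) :
    ∀ᵐ x ∂iidUniform (m + 1) θ, sampleMax x ≠ 0 := by
  have hvol : ∀ᵐ x : Fin (m + 1) → ℝ, ∀ i, x i ≠ 0 :=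
    ae_all_iff.2 fun i => Measure.ae_eval_ne (fun _ => volume) i 0
  rw [iidUniform_eq_smul_restrict _ hθ]
  filter_upwards [Measure.ae_smul_measure (ae_restrict_of_ae hvol) _] with x hx
  obtain ⟨k, hk⟩ := Finite.exists_max x
  rw [sampleMax_eq_of_forall_le hk]
  exact hx k

/-- Under an i.i.d. `Uniform[0,θ]` sample, `n·τ_n − 1 = ∑_{i=1}^{n-1} X_(i)/X_(n)` and it is
distributed as the sum of `n − 1` independent `Uniform[0,1]` variables (Irwin–Hall). -/
theorem n_tau_sub_one_irwinHall
    (n : ℕ) (hn : 2 ≤ n) (θ : ℝ) (hθ : 0 < θ) :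
    (∀ᵐ x ∂iidUniform n θ,
      (n : ℝ) * tau x - 1 =
        ∑ i : Fin (n - 1),
          sortedVec x (Fin.castLE (Nat.sub_le n 1) i) / sortedVec x ⟨n - 1, by omega⟩) ∧
    (iidUniform n θ).map (fun x => (n : ℝ) * tau x - 1) = irwinHall (n - 1) := by
  obtain ⟨m, rfl⟩ : ∃ m, n = m + 1 := ⟨n - 1, by omega⟩
  refine ⟨?_, map_tau_eq_irwinHall m hθ⟩
  filter_upwards [ae_sampleMax_ne_zero m hθ] with x hx
  exact mul_tau_sub_one_eq_sum_sortedVec hx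
end

section
/- Let n ≥ 1, let X_1,…,X_n be i.i.d. Uniform[0,1] random variables with order statistics X_(1) ≤ … ≤ X_(n), and let Y_1,…,Y_{n+1} be i.i.d. Exponential(1) random variables. Then the vector of spacings (X_(1), X_(2) − X_(1), …, X_(n) − X_(n−1), 1 − X_(n)) has the same distribution as (Y_1/S, Y_2/S, …, Y_{n+1}/S) where S = Σ_{i=1}^{n+1} Y_i; that is, the uniform spacings follow the standard Dirichlet distribution Dir(n+1). -/
open MeasureTheory ProbabilityTheory

/-- The joint law of an i.i.d. sample of size `n` from `Exponential(r)`. -/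
noncomputable def iidExp (n : ℕ) (r : ℝ) : Measure (Fin n → ℝ) :=
  Measure.pi fun _ => expMeasure r

/-- The sorted sample extended by `0` below and `1` above:
`(0, X_(1), …, X_(n), 1)`. -/
noncomputable def extendedSorted {n : ℕ} (x : Fin n → ℝ) : Fin (n + 2) → ℝ :=
  Fin.cons 0 (Fin.snoc (sortedVec x) 1)

/-- The spacings `(X_(1), X_(2) − X_(1), …, X_(n) − X_(n-1), 1 − X_(n))` of a sample. -/
noncomputable def spacings {n : ℕ} (x : Fin n → ℝ) : Fin (n + 1) → ℝ :=
  fun i => extendedSorted x i.succ - extendedSorted x i.castSucc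

/-- The consecutive differences of `(0, z 0, …, z (n - 1), 1)`. -/
noncomputable def gaps {n : ℕ} (z : Fin n → ℝ) (i : Fin (n + 1)) : ℝ :=
  (Fin.cons 0 (Fin.snoc z 1) : Fin (n + 2) → ℝ) i.succ -
    (Fin.cons 0 (Fin.snoc z 1) : Fin (n + 2) → ℝ) i.castSucc

/-- The open solid simplex of points with positive coordinates of sum less than `1`. -/
def openSimplex (n : ℕ) : Set (Fin n → ℝ) := {u | (∀ i, 0 < u i) ∧ ∑ i, u i < 1}

/-- Completes a vector by a last coordinate making the sum equal to `1`. -/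
noncomputable def simplexLift {n : ℕ} (u : Fin n → ℝ) : Fin (n + 1) → ℝ :=
  Fin.snoc u (1 - ∑ i, u i)

/-- The points whose coordinates form a strictly increasing sequence in `(0, 1)`. -/
def increasingSimplex (n : ℕ) : Set (Fin n → ℝ) := {z | ∀ i, 0 < gaps z i}

lemma measurable_snoc {n : ℕ} : Measurable
    (fun p : (Fin n → ℝ) × ℝ => (Fin.snoc p.1 p.2 : Fin (n + 1) → ℝ)) := by
  refine measurable_pi_iff.2 fun i => ?_
  induction i using Fin.lastCases with
  | last => simpa using measurable_snd
  | cast i => simpa using! (measurable_pi_apply i).comp measurable_fst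

lemma measurable_simplexLift {n : ℕ} : Measurable (simplexLift (n := n)) :=
  measurable_snoc.comp (measurable_id.prodMk (by fun_prop))

lemma measurable_gaps {n : ℕ} : Measurable (gaps (n := n)) := by
  have h : Measurable fun z : Fin n → ℝ => (Fin.cons 0 (Fin.snoc z 1) : Fin (n + 2) → ℝ) := by
    refine measurable_pi_iff.2 fun i => ?_
    induction i using Fin.cases with
    | zero => simp
    | succ i =>
      simpa using! (measurable_pi_apply i).comp
        (measurable_snoc.comp (measurable_id.prodMk measurable_const))
  exact measurable_pi_iff.2 fun i =>
    ((measurable_pi_apply _).comp h).sub ((measurable_pi_apply _).comp h)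

lemma measurableSet_openSimplex (n : ℕ) : MeasurableSet (openSimplex n) := by
  have h : openSimplex n = (⋂ i, {u | 0 < u i}) ∩ {u | ∑ i, u i < 1} := by
    ext u; simp [openSimplex]
  rw [h]
  exact (MeasurableSet.iInter fun i => measurableSet_lt (by fun_prop) (by fun_prop)).inter
    (measurableSet_lt (by fun_prop) (by fun_prop))

lemma measurableSet_increasingSimplex (n : ℕ) : MeasurableSet (increasingSimplex n) := by
  have h : increasingSimplex n = ⋂ i, {z | 0 < gaps z i} := by
    ext z; simp [increasingSimplex]
  rw [h]
  exact MeasurableSet.iInter fun i =>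
    measurableSet_lt measurable_const ((measurable_pi_apply i).comp measurable_gaps)

lemma mem_increasingSimplex_iff {n : ℕ} {z : Fin n → ℝ} :
    z ∈ increasingSimplex n ↔ StrictMono z ∧ ∀ i, z i ∈ Set.Ioo (0 : ℝ) 1 := by
  have h : z ∈ increasingSimplex n ↔
      StrictMono (Fin.cons 0 (Fin.snoc z 1) : Fin (n + 2) → ℝ) := by
    simp [increasingSimplex, gaps, Fin.strictMono_iff_lt_succ]
  rw [h]
  constructor
  · intro hs
    refine ⟨fun i j hij => ?_, fun i => ⟨?_, ?_⟩⟩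
    · simpa using hs (Fin.succ_lt_succ_iff.2 (Fin.castSucc_lt_castSucc_iff.2 hij))
    · simpa using hs (Fin.succ_pos i.castSucc)
    · simpa using hs (Fin.succ_lt_succ_iff.2 (Fin.castSucc_lt_last i))
  · rintro ⟨hz, hI⟩ i j hij
    induction j using Fin.cases with
    | zero => exact absurd hij (Fin.not_lt_zero _)
    | succ j =>
      induction i using Fin.cases with
      | zero =>
        induction j using Fin.lastCases with
        | last => simp
        | cast j => simpa using (hI j).1
      | succ i =>
        have hij := Fin.succ_lt_succ_iff.1 hij
        induction i using Fin.lastCases with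
        | last => exact absurd hij (Fin.le_last j).not_gt
        | cast i =>
          induction j using Fin.lastCases with
          | last => simpa using (hI i).2
          | cast j => simpa using hz (Fin.castSucc_lt_castSucc_iff.1 hij)

/-- The vector of partial sums `(u 0, u 0 + u 1, …, u 0 + ⋯ + u (n - 1))`. -/
def cumSum {n : ℕ} (u : Fin n → ℝ) (i : Fin n) : ℝ := ∑ j, if j ≤ i then u j else 0

lemma cumSum_eq_partialSum {n : ℕ} (u : Fin n → ℝ) (i : Fin n) :
    cumSum u i = Fin.partialSum u i.succ := by
  induction n with
  | zero => exact i.elim0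
  | succ n ih =>
    rw [cumSum, Fin.partialSum_succ', Fin.sum_univ_succ]
    induction i using Fin.cases with
    | zero => simp
    | succ i => simpa [cumSum, Fin.tail] using ih (Fin.tail u) i

lemma gaps_cumSum {n : ℕ} (u : Fin n → ℝ) : gaps (cumSum u) = simplexLift u := by
  have h : (Fin.cons 0 (Fin.snoc (cumSum u) 1) : Fin (n + 2) → ℝ) =
      Fin.partialSum (simplexLift u) := by
    funext i
    induction i using Fin.cases with
    | zero => simp
    | succ i =>
      induction i using Fin.lastCases with
      | last =>
        have hu : Fin.partialSum u (Fin.last n) = ∑ i, u i := by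
          rw [Fin.partialSum, Fin.val_last, List.take_of_length_le (by simp), List.sum_ofFn]
        rw [Fin.partialSum_succ, ← Fin.partialSum_init]
        simp [simplexLift, hu]
      | cast i =>
        rw [← Fin.castSucc_succ, ← Fin.partialSum_init]
        simp [simplexLift, cumSum_eq_partialSum]
  funext i
  rw [gaps, h, Fin.partialSum_succ, add_sub_cancel_left]

lemma cumSum_preimage_increasingSimplex (n : ℕ) :
    cumSum ⁻¹' increasingSimplex n = openSimplex n := by
  ext u
  simp [increasingSimplex, gaps_cumSum, openSimplex, simplexLift, Fin.forall_fin_succ']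

lemma measurePreserving_cumSum (n : ℕ) :
    MeasurePreserving (cumSum (n := n)) volume volume := by
  let M : Matrix (Fin n) (Fin n) ℝ := Matrix.of fun i j => if j ≤ i then 1 else 0
  have hM : M.det = 1 := by
    rw [Matrix.det_of_isLowerTriangular M fun i j hij => by
      simpa [M] using hij]
    simp [M]
  have hf : cumSum (n := n) = Matrix.toLin' M := by
    funext u i
    simp [M, cumSum, Matrix.mulVec, dotProduct]
  refine ⟨?_, ?_⟩
  · exact measurable_pi_iff.2 fun i => Finset.measurable_sum _ fun j _ => by
      split_ifs <;> fun_prop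
  · rw [hf, Real.map_matrix_volume_pi_eq_smul_volume_pi (by simp [hM]), hM]
    simp

lemma sortedVec_eq_comp {n : ℕ} {x : Fin n → ℝ} {σ : Equiv.Perm (Fin n)}
    (h : Monotone (x ∘ σ)) : sortedVec x = x ∘ σ :=
  (Tuple.comp_sort_eq_comp_iff_monotone.2 h).symm

lemma measurable_comp_perm {n : ℕ} (σ : Equiv.Perm (Fin n)) :
    Measurable fun x : Fin n → ℝ => x ∘ σ :=
  measurable_pi_iff.2 fun i => measurable_pi_apply (σ i)

lemma measurable_sortedVec {n : ℕ} : Measurable (sortedVec (n := n)) := by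
  intro s hs
  have h : sortedVec ⁻¹' s =
      ⋃ σ : Equiv.Perm (Fin n), (fun x => x ∘ σ) ⁻¹' ({z | Monotone z} ∩ s) := by
    ext x
    simp only [Set.mem_preimage, Set.mem_iUnion, Set.mem_inter_iff, Set.mem_ofPred_eq]
    refine ⟨fun hx => ⟨Tuple.sort x, Tuple.monotone_sort x, hx⟩, ?_⟩
    rintro ⟨σ, hσ, hx⟩
    rwa [sortedVec_eq_comp hσ]
  rw [h]
  have hmono : MeasurableSet {z : Fin n → ℝ | Monotone z} := by
    have : {z : Fin n → ℝ | Monotone z} = ⋂ i, ⋂ j, ⋂ _ : i ≤ j, {z | z i ≤ z j} := by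
      ext z; simp [Monotone]
    rw [this]
    exact MeasurableSet.iInter fun i => MeasurableSet.iInter fun j => MeasurableSet.iInter fun _ =>
      measurableSet_le (by fun_prop) (by fun_prop)
  exact MeasurableSet.iUnion fun σ => measurable_comp_perm σ (hmono.inter hs)

lemma measurePreserving_comp_perm {n : ℕ} (σ : Equiv.Perm (Fin n)) :
    MeasurePreserving (fun x : Fin n → ℝ => x ∘ σ) volume volume := by
  convert volume_measurePreserving_piCongrLeft (fun _ : Fin n => ℝ) σ.symm using 1
  funext x i
  simpa using! (Equiv.piCongrLeft_apply_apply (fun _ : Fin n => ℝ) σ.symm x (σ i)).symm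

lemma ae_injective (n : ℕ) : ∀ᵐ x : Fin n → ℝ, Function.Injective x := by
  have h : ∀ i j : Fin n, i ≠ j → ∀ᵐ x : Fin n → ℝ, x i ≠ x j := by
    intro i j hij
    let S : Submodule ℝ (Fin n → ℝ) :=
      LinearMap.ker (LinearMap.proj (R := ℝ) (φ := fun _ : Fin n => ℝ) i - LinearMap.proj j)
    have hS : S ≠ ⊤ := by
      intro hS
      have : Pi.single i (1 : ℝ) ∈ S := hS ▸ Submodule.mem_top
      simp [S, hij.symm] at this
    rw [ae_iff]
    convert Measure.addHaar_submodule volume S hS using 2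
    ext x
    simp [S, sub_eq_zero]
  have h' : ∀ᵐ x : Fin n → ℝ, ∀ i j, i ≠ j → x i ≠ x j :=
    ae_all_iff.2 fun i => ae_all_iff.2 fun j => by
      by_cases hij : i = j
      · simp [hij]
      · simpa [hij] using h i j hij
  filter_upwards [h'] with x hx i j hij
  by_contra hne
  exact hx i j hne hij

lemma map_sortedVec_restrict_cube (n : ℕ) :
    (volume.restrict (Set.univ.pi fun _ : Fin n => Set.Ioo (0 : ℝ) 1)).map sortedVec =
      (n.factorial : ENNReal) • volume.restrict (increasingSimplex n) := by
  ext s hs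
  let A : Equiv.Perm (Fin n) → Set (Fin n → ℝ) :=
    fun σ => (fun x => x ∘ σ) ⁻¹' (increasingSimplex n ∩ s)
  have hA : ∀ σ, MeasurableSet (A σ) := fun σ =>
    measurable_comp_perm σ ((measurableSet_increasingSimplex n).inter hs)
  have hdisj : Pairwise (Function.onFun Disjoint A) := by
    intro σ τ hne
    refine Set.disjoint_left.2 fun x hσ hτ => hne ?_
    have hσ := (mem_increasingSimplex_iff.1 hσ.1).1
    have hτ := (mem_increasingSimplex_iff.1 hτ.1).1
    have h : x ∘ σ = x ∘ τ := by
      rw [← sortedVec_eq_comp hσ.monotone, ← sortedVec_eq_comp hτ.monotone]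
    have hx : Function.Injective x := by
      simpa [Function.comp_assoc] using hσ.injective.comp σ.symm.injective
    exact Equiv.ext fun i => hx (congrFun h i)
  have hunion : (sortedVec ⁻¹' s ∩ Set.univ.pi fun _ : Fin n => Set.Ioo (0 : ℝ) 1 : Set _)
      =ᵐ[volume] ⋃ σ, A σ := by
    filter_upwards [ae_injective n] with x hx
    change (x ∈ sortedVec ⁻¹' s ∩ Set.univ.pi fun _ : Fin n => Set.Ioo (0 : ℝ) 1) = (x ∈ ⋃ σ, A σ)
    refine propext ?_
    simp only [Set.mem_inter_iff, Set.mem_preimage, Set.mem_pi, Set.mem_univ, true_implies,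
      Set.mem_iUnion, A, mem_increasingSimplex_iff]
    constructor
    · rintro ⟨hxs, hxI⟩
      exact ⟨Tuple.sort x, ⟨(Tuple.monotone_sort x).strictMono_of_injective
        (hx.comp (Tuple.sort x).injective), fun i => hxI _⟩, hxs⟩
    · rintro ⟨σ, ⟨hσ, hI⟩, hxs⟩
      refine ⟨by rwa [sortedVec_eq_comp hσ.monotone], fun i => by simpa using hI (σ.symm i)⟩
  rw [Measure.map_apply measurable_sortedVec hs, Measure.restrict_apply (measurable_sortedVec hs),
    measure_congr hunion, measure_iUnion hdisj hA, tsum_fintype]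
  have hvol : ∀ σ, volume (A σ) = volume (increasingSimplex n ∩ s) := fun σ =>
    (measurePreserving_comp_perm σ).measure_preimage
      ((measurableSet_increasingSimplex n).inter hs).nullMeasurableSet
  simp [hvol, Fintype.card_perm, Measure.restrict_apply hs, Set.inter_comm]

lemma iidUniform_one (n : ℕ) :
    iidUniform n 1 = volume.restrict (Set.univ.pi fun _ : Fin n => Set.Ioo (0 : ℝ) 1) := by
  have h : uniformMeasure 1 = volume.restrict (Set.Ioo (0 : ℝ) 1) := by
    simp [uniformMeasure, Measure.restrict_congr_set Ioo_ae_eq_Icc]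
  rw [iidUniform, h, volume_pi, Measure.restrict_pi_pi]

lemma map_spacings_iidUniform (n : ℕ) :
    (iidUniform n 1).map spacings =
      (n.factorial : ENNReal) • (volume.restrict (openSimplex n)).map simplexLift := by
  have hs : spacings (n := n) = gaps ∘ sortedVec := rfl
  have hl : simplexLift (n := n) = gaps ∘ cumSum := funext fun u => (gaps_cumSum u).symm
  have hmp := (measurePreserving_cumSum n).restrict_preimage (measurableSet_increasingSimplex n)
  rw [cumSum_preimage_increasingSimplex] at hmp
  rw [hs, ← Measure.map_map measurable_gaps measurable_sortedVec, iidUniform_one,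
    map_sortedVec_restrict_cube, Measure.map_smul, hl,
    ← Measure.map_map measurable_gaps hmp.measurable, hmp.map_eq]

lemma lintegral_fin_prod_eq_prod {n : ℕ} (f : Fin n → ℝ → ENNReal) (hf : ∀ i, Measurable (f i)) :
    ∫⁻ x : Fin n → ℝ, ∏ i, f i (x i) = ∏ i, ∫⁻ t, f i t := by
  induction n with
  | zero => simp [volume_pi]
  | succ n ih =>
    have hmp := (volume_preserving_piFinSuccAbove (fun _ : Fin (n + 1) => ℝ) 0).symm
    have hfm : Measurable fun x : Fin n → ℝ => ∏ i, f i.succ (x i) :=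
      Finset.measurable_prod _ fun i _ => (hf _).comp (measurable_pi_apply i)
    rw [← hmp.lintegral_comp_emb (MeasurableEquiv.measurableEmbedding _), Fin.prod_univ_succ,
      ← ih _ fun i => hf _, ← lintegral_prod_mul (hf 0).aemeasurable hfm.aemeasurable]
    simp [Fin.prod_univ_succ, MeasurableEquiv.piFinSuccAbove_symm_apply]
    rfl

lemma pi_withDensity_volume {n : ℕ} (g : ℝ → ENNReal) (hg : Measurable g)
    [SigmaFinite ((volume : Measure ℝ).withDensity g)] :
    (Measure.pi fun _ : Fin n => (volume : Measure ℝ).withDensity g) =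
      volume.withDensity fun y => ∏ i, g (y i) := by
  refine Measure.pi_eq fun s hs => ?_
  rw [withDensity_apply _ (MeasurableSet.univ_pi hs),
    ← lintegral_indicator (MeasurableSet.univ_pi hs)]
  simp_rw [withDensity_apply _ (hs _), ← lintegral_indicator (hs _)]
  rw [← lintegral_fin_prod_eq_prod _ fun i => hg.indicator (hs i)]
  refine lintegral_congr fun y => ?_
  by_cases hy : y ∈ Set.univ.pi s
  · rw [Set.indicator_of_mem hy]
    exact Finset.prod_congr rfl fun i _ => (Set.indicator_of_mem (hy i trivial) _).symm
  · rw [Set.indicator_of_notMem hy]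
    obtain ⟨i, hi⟩ : ∃ i, y i ∉ s i := by simpa using hy
    exact (Finset.prod_eq_zero (Finset.mem_univ i) (Set.indicator_of_notMem hi _)).symm

/-- The density of the standard exponential distribution, vanishing at `0`. -/
noncomputable def expDensity : ℝ → ENNReal :=
  (Set.Ioi 0).indicator fun t => ENNReal.ofReal (Real.exp (-t))

lemma measurable_expDensity : Measurable expDensity :=
  Measurable.indicator (by fun_prop) measurableSet_Ioi

lemma expMeasure_one_eq_withDensity : expMeasure 1 = volume.withDensity expDensity := by
  refine withDensity_congr_ae ?_
  filter_upwards [Measure.ae_ne volume (0 : ℝ)] with t ht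
  change exponentialPDF 1 t = _
  rcases ht.lt_or_gt with h | h
  · rw [exponentialPDF_of_neg h, expDensity, Set.indicator_of_notMem (by simpa using h.le)]
  · rw [exponentialPDF_of_nonneg h.le, expDensity, Set.indicator_of_mem (Set.mem_Ioi.2 h)]
    simp

lemma iidExp_one (n : ℕ) :
    iidExp n 1 = volume.withDensity fun y => ∏ i, expDensity (y i) := by
  have : IsProbabilityMeasure (volume.withDensity expDensity) :=
    expMeasure_one_eq_withDensity ▸ isProbabilityMeasure_expMeasure one_pos
  rw [iidExp, expMeasure_one_eq_withDensity, pi_withDensity_volume _ measurable_expDensity]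

lemma prod_expDensity {n : ℕ} (y : Fin n → ℝ) :
    ∏ i, expDensity (y i) =
      {y : Fin n → ℝ | ∀ i, 0 < y i}.indicator
        (fun y => ENNReal.ofReal (Real.exp (-∑ i, y i))) y := by
  by_cases hy : ∀ i, 0 < y i
  · rw [Set.indicator_of_mem (by exact hy), ← Finset.sum_neg_distrib, Real.exp_sum,
      ENNReal.ofReal_prod_of_nonneg fun i _ => (Real.exp_pos _).le]
    exact Finset.prod_congr rfl fun i _ => Set.indicator_of_mem (hy i) _
  · rw [Set.indicator_of_notMem (by exact hy)]
    push Not at hy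
    obtain ⟨i, hi⟩ := hy
    exact Finset.prod_eq_zero (Finset.mem_univ i) (Set.indicator_of_notMem (by simpa using hi) _)

lemma lintegral_eq_lintegral_snoc {n : ℕ} (F : (Fin (n + 1) → ℝ) → ENNReal) (hF : Measurable F) :
    ∫⁻ y, F y = ∫⁻ u : Fin n → ℝ, ∫⁻ t : ℝ, F (Fin.snoc u t) := by
  have hmp := (volume_preserving_piFinSuccAbove (fun _ : Fin (n + 1) => ℝ) (Fin.last n)).symm
  rw [← hmp.lintegral_comp_emb (MeasurableEquiv.measurableEmbedding _), Measure.volume_eq_prod,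
    lintegral_prod_symm _ (by exact (hF.comp (MeasurableEquiv.measurable _)).aemeasurable)]
  refine lintegral_congr fun u => lintegral_congr fun t => ?_
  congr 1
  exact Fin.insertNth_last' t u

lemma lintegral_eq_mul_lintegral_smul {n : ℕ} (h : (Fin n → ℝ) → ENNReal) (hh : Measurable h)
    {s : ℝ} (hs : 0 < s) :
    ∫⁻ u, h u = ENNReal.ofReal (s ^ n) * ∫⁻ v, h (s • v) := by
  have hm := Measure.map_addHaar_smul (volume : Measure (Fin n → ℝ)) hs.ne'
  rw [← lintegral_map hh (measurable_const_smul s), hm, lintegral_smul_measure, smul_eq_mul,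
    ← mul_assoc, ← ENNReal.ofReal_mul (by positivity)]
  have : s ^ n * |(s ^ Module.finrank ℝ (Fin n → ℝ))⁻¹| = 1 := by
    rw [Module.finrank_fin_fun, abs_of_pos (by positivity), mul_inv_cancel₀ (by positivity)]
  rw [this, ENNReal.ofReal_one, one_mul]

/-- The map dividing a vector by the sum of its coordinates. -/
noncomputable def divSum {n : ℕ} (y : Fin n → ℝ) (i : Fin n) : ℝ := y i / ∑ j, y j

lemma measurable_divSum {n : ℕ} : Measurable (divSum (n := n)) :=
  measurable_pi_iff.2 fun i => by unfold divSum; fun_prop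

lemma snoc_smul_eq_smul_simplexLift {n : ℕ} (s : ℝ) (v : Fin n → ℝ) :
    (Fin.snoc (s • v) (s - ∑ i, (s • v) i) : Fin (n + 1) → ℝ) = s • simplexLift v := by
  funext i
  induction i using Fin.lastCases with
  | last => simp [simplexLift, ← Finset.mul_sum, mul_sub]
  | cast i => simp [simplexLift]

lemma sum_simplexLift {n : ℕ} (v : Fin n → ℝ) : ∑ i, simplexLift v i = 1 := by
  simp [simplexLift, Fin.sum_univ_castSucc]

lemma simplexLift_pos_iff {n : ℕ} {v : Fin n → ℝ} :
    (∀ i, 0 < simplexLift v i) ↔ v ∈ openSimplex n := by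
  simp [simplexLift, openSimplex, Fin.forall_fin_succ']

/-- Integration in the coordinates given by the sum `s` of the coordinates and the point `v` of
the hyperplane of vectors of sum `1`. -/
lemma lintegral_eq_lintegral_smul_simplexLift {n : ℕ} (F : (Fin (n + 1) → ℝ) → ENNReal)
    (hF : Measurable F) (h0 : ∀ y, ∑ i, y i ≤ 0 → F y = 0) :
    ∫⁻ y, F y = ∫⁻ s : ℝ in Set.Ioi 0, ENNReal.ofReal (s ^ n) *
      ∫⁻ v : Fin n → ℝ, F (s • simplexLift v) := by
  have hsnoc : Measurable fun p : (Fin n → ℝ) × ℝ => F (Fin.snoc p.1 (p.2 - ∑ i, p.1 i)) :=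
    hF.comp (measurable_snoc.comp (measurable_fst.prodMk (by fun_prop)))
  calc ∫⁻ y, F y
      = ∫⁻ u : Fin n → ℝ, ∫⁻ s : ℝ, F (Fin.snoc u (s - ∑ i, u i)) := by
        rw [lintegral_eq_lintegral_snoc F hF]
        exact lintegral_congr fun u =>
          (lintegral_sub_right_eq_self (fun t => F (Fin.snoc u t)) (∑ i, u i)).symm
    _ = ∫⁻ s : ℝ, ∫⁻ u : Fin n → ℝ, F (Fin.snoc u (s - ∑ i, u i)) :=
        lintegral_lintegral_swap hsnoc.aemeasurable
    _ = ∫⁻ s : ℝ in Set.Ioi 0, ∫⁻ u : Fin n → ℝ, F (Fin.snoc u (s - ∑ i, u i)) := by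
        rw [← lintegral_indicator measurableSet_Ioi]
        refine lintegral_congr fun s => ?_
        by_cases hs : 0 < s
        · rw [Set.indicator_of_mem (Set.mem_Ioi.2 hs)]
        · rw [Set.indicator_of_notMem (by simpa using hs)]
          have : ∀ u : Fin n → ℝ, F (Fin.snoc u (s - ∑ i, u i)) = 0 := fun u =>
            h0 _ (by simpa [Fin.sum_univ_castSucc] using hs)
          simp [this]
    _ = _ := by
        refine setLIntegral_congr_fun measurableSet_Ioi fun s hs => ?_
        have hm : Measurable fun u : Fin n → ℝ => F (Fin.snoc u (s - ∑ i, u i)) :=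
          hsnoc.comp (measurable_id.prodMk measurable_const)
        simp only [lintegral_eq_mul_lintegral_smul _ hm hs, snoc_smul_eq_smul_simplexLift]

lemma sum_smul_simplexLift {n : ℕ} (s : ℝ) (v : Fin n → ℝ) :
    ∑ i, (s • simplexLift v) i = s := by
  simp [← Finset.mul_sum, sum_simplexLift]

lemma divSum_smul_simplexLift {n : ℕ} {s : ℝ} (hs : s ≠ 0) (v : Fin n → ℝ) :
    divSum (s • simplexLift v) = simplexLift v := by
  funext i
  rw [divSum, sum_smul_simplexLift, Pi.smul_apply, smul_eq_mul, mul_div_cancel_left₀ _ hs]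

lemma prod_expDensity_smul_simplexLift {n : ℕ} {s : ℝ} (hs : 0 < s) (v : Fin n → ℝ) :
    ∏ i, expDensity ((s • simplexLift v) i) =
      (openSimplex n).indicator (fun _ => ENNReal.ofReal (Real.exp (-s))) v := by
  have hpos : (∀ i, 0 < (s • simplexLift v) i) ↔ v ∈ openSimplex n := by
    simp [hs, ← simplexLift_pos_iff]
  rw [prod_expDensity]
  by_cases hv : v ∈ openSimplex n
  · rw [Set.indicator_of_mem hv, Set.indicator_of_mem (by exact hpos.2 hv), sum_smul_simplexLift]
  · rw [Set.indicator_of_notMem hv, Set.indicator_of_notMem (by exact mt hpos.1 hv)]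

lemma prod_expDensity_eq_zero {n : ℕ} {y : Fin (n + 1) → ℝ} (hy : ∑ i, y i ≤ 0) :
    ∏ i, expDensity (y i) = 0 := by
  rw [prod_expDensity, Set.indicator_of_notMem]
  exact fun hpos => hy.not_gt (Finset.sum_pos (fun i _ => hpos i) Finset.univ_nonempty)

lemma lintegral_divSum_iidExp {n : ℕ} (f : (Fin (n + 1) → ℝ) → ENNReal) (hf : Measurable f) :
    ∫⁻ y, f (divSum y) ∂(iidExp (n + 1) 1) =
      (∫⁻ s : ℝ in Set.Ioi 0, ENNReal.ofReal (s ^ n) * ENNReal.ofReal (Real.exp (-s))) *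
        ∫⁻ v in openSimplex n, f (simplexLift v) := by
  have hd : Measurable fun y : Fin (n + 1) → ℝ => ∏ i, expDensity (y i) :=
    Finset.measurable_prod _ fun i _ => measurable_expDensity.comp (measurable_pi_apply i)
  have hfd : Measurable fun y => f (divSum y) := hf.comp measurable_divSum
  rw [iidExp_one, lintegral_withDensity_eq_lintegral_mul _ hd hfd,
    lintegral_eq_lintegral_smul_simplexLift _ (hd.mul hfd)
      fun y hy => by rw [Pi.mul_apply, prod_expDensity_eq_zero hy, zero_mul],
    ← lintegral_mul_const _ (by fun_prop)]
  refine setLIntegral_congr_fun measurableSet_Ioi fun s hs => ?_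
  have hs : 0 < s := hs
  simp only [Pi.mul_apply, prod_expDensity_smul_simplexLift hs, divSum_smul_simplexLift hs.ne']
  have hmul : ∀ v, (openSimplex n).indicator (fun _ => ENNReal.ofReal (Real.exp (-s))) v *
      f (simplexLift v) = (openSimplex n).indicator
        (fun v => ENNReal.ofReal (Real.exp (-s)) * f (simplexLift v)) v := fun v =>
    (Set.indicator_mul_left _ _ fun v => f (simplexLift v)).symm
  simp_rw [hmul]
  rw [lintegral_indicator (measurableSet_openSimplex n),
    lintegral_const_mul _ (by exact hf.comp measurable_simplexLift), mul_assoc]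

lemma map_divSum_iidExp (n : ℕ) :
    (iidExp (n + 1) 1).map divSum =
      (∫⁻ s : ℝ in Set.Ioi 0, ENNReal.ofReal (s ^ n) * ENNReal.ofReal (Real.exp (-s))) •
        (volume.restrict (openSimplex n)).map simplexLift := by
  refine Measure.ext_of_lintegral _ fun f hf => ?_
  rw [lintegral_map hf measurable_divSum, lintegral_smul_measure,
    lintegral_map hf measurable_simplexLift, lintegral_divSum_iidExp f hf, smul_eq_mul]

lemma smul_measure_eq_smul_of_isProbabilityMeasure {α : Type*} [MeasurableSpace α] {μ : Measure α}
    {a b : ENNReal} (ha : IsProbabilityMeasure (a • μ)) (hb : IsProbabilityMeasure (b • μ)) :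
    a • μ = b • μ := by
  have ha : a * μ Set.univ = 1 := ha.measure_univ
  have hb : b * μ Set.univ = 1 := hb.measure_univ
  rw [ENNReal.eq_inv_of_mul_eq_one_left ha, ENNReal.eq_inv_of_mul_eq_one_left hb]

/-- The spacings of an i.i.d. `Uniform[0,1]` sample of size `n` have the standard
Dirichlet distribution `Dir(n+1)`: they are distributed as
`(Y_1/S, …, Y_{n+1}/S)` for `Y_i` i.i.d. `Exponential(1)` and `S = ∑ Y_i`. -/
theorem uniform_spacings_dirichlet
    (n : ℕ) (hn : 1 ≤ n) :
    (iidUniform n 1).map (fun x => spacings x) =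
      (iidExp (n + 1) 1).map (fun y (i : Fin (n + 1)) => y i / ∑ j, y j) := by
  have hU : IsProbabilityMeasure (iidUniform n 1) := ⟨by simp [iidUniform_one, volume_pi_pi]⟩
  have hE : IsProbabilityMeasure (iidExp (n + 1) 1) := by
    have := isProbabilityMeasure_expMeasure one_pos
    exact inferInstanceAs (IsProbabilityMeasure (Measure.pi _))
  have hU' := Measure.isProbabilityMeasure_map (μ := iidUniform n 1)
    (measurable_gaps.comp measurable_sortedVec).aemeasurable
  have hE' := Measure.isProbabilityMeasure_map (μ := iidExp (n + 1) 1)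
    measurable_divSum.aemeasurable
  change IsProbabilityMeasure ((iidUniform n 1).map spacings) at hU'
  change (iidUniform n 1).map spacings = (iidExp (n + 1) 1).map divSum
  rw [map_spacings_iidUniform] at hU' ⊢
  rw [map_divSum_iidExp] at hE' ⊢
  exact smul_measure_eq_smul_of_isProbabilityMeasure hU' hE'
end

section
/- For each n ≥ 2 let X_1,…,X_n be i.i.d. Exponential(1) random variables and let τ_n = X̄_n / X_(n). Then for every t ∈ ℝ, P( (log n)² · (τ_n − 1/log n) ≤ t ) converges, as n → ∞, to 1 − exp(−e^{t}); that is, (log n)²·(τ_n − 1/log n) converges in distribution to −G where G has the standard Gumbel distribution with CDF exp(−e^{−t}). -/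
open MeasureTheory ProbabilityTheory Filter

/-- `Exponential(1)` has density `exp (-x)` with respect to Lebesgue measure on `(0, ∞)`. -/
lemma expMeasure_one_eq_withDensity_s16 :
    expMeasure 1 = (volume.restrict (Set.Ioi (0 : ℝ))).withDensity
      fun x => ENNReal.ofReal (Real.exp (-x)) := by
  have hdef : expMeasure 1 = volume.withDensity (exponentialPDF 1) := rfl
  rw [hdef, ← withDensity_indicator measurableSet_Ioi]
  refine withDensity_congr_ae ?_
  filter_upwards [compl_mem_ae_iff.2 (measure_singleton (0 : ℝ))] with x hx
  rcases lt_or_gt_of_ne (show x ≠ 0 from hx) with h | h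
  · rw [exponentialPDF_of_neg h, Set.indicator_of_notMem (by simpa using h.le)]
  · rw [exponentialPDF_of_nonneg h.le, Set.indicator_of_mem (by simpa using h)]
    simp

lemma integrable_expMeasure_one_iff {f : ℝ → ℝ} :
    Integrable f (expMeasure 1) ↔
      IntegrableOn (fun x => Real.exp (-x) * f x) (Set.Ioi 0) := by
  rw [expMeasure_one_eq_withDensity_s16, integrable_withDensity_iff_integrable_smul'
    (by fun_prop) (by simp)]
  simp [IntegrableOn, ENNReal.toReal_ofReal (Real.exp_nonneg _)]

lemma integral_expMeasure_one (f : ℝ → ℝ) :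
    ∫ x, f x ∂expMeasure 1 = ∫ x in Set.Ioi 0, Real.exp (-x) * f x := by
  rw [expMeasure_one_eq_withDensity_s16, integral_withDensity_eq_integral_toReal_smul
    (by fun_prop) (by simp)]
  simp [ENNReal.toReal_ofReal (Real.exp_nonneg _)]

lemma memLp_two_id_expMeasure_one : MemLp (fun x : ℝ => x) 2 (expMeasure 1) := by
  rw [memLp_two_iff_integrable_sq (by fun_prop), integrable_expMeasure_one_iff]
  convert Real.GammaIntegral_convergent (s := 3) (by norm_num) using 3
  rw [← Real.rpow_natCast]
  norm_num

lemma integral_id_expMeasure_one : ∫ x, x ∂expMeasure 1 = 1 := by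
  rw [integral_expMeasure_one, ← Real.Gamma_two, Real.Gamma_eq_integral two_pos]
  norm_num

instance isProbabilityMeasure_iidExp_one (n : ℕ) : IsProbabilityMeasure (iidExp n 1) := by
  have := isProbabilityMeasure_expMeasure one_pos
  unfold iidExp
  infer_instance

/-- The distribution function of the sample maximum. -/
lemma iidExp_one_real_forall_le (n : ℕ) {a : ℝ} (ha : 0 ≤ a) :
    (iidExp n 1).real {x | ∀ i, x i ≤ a} = (1 - Real.exp (-a)) ^ n := by
  have := isProbabilityMeasure_expMeasure one_pos
  have hset : {x : Fin n → ℝ | ∀ i, x i ≤ a} = Set.univ.pi fun _ => Set.Iic a := by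
    ext x; simp [Pi.le_def]
  have hcdf : (expMeasure 1).real (Set.Iic a) = 1 - Real.exp (-a) := by
    rw [← cdf_eq_real, cdf_expMeasure_eq one_pos, if_pos ha, one_mul]
  rw [hset, iidExp, measureReal_def, Measure.pi_pi]
  simp [← measureReal_def, hcdf]

/-- Chebyshev's inequality for the empirical mean. -/
lemma iidExp_one_real_le_abs_sampleMean_sub_one {n : ℕ} (hn : 0 < n) {ε : ℝ} (hε : 0 < ε) :
    (iidExp n 1).real {x | ε ≤ |sampleMean x - 1|} ≤
      Var[fun x => x; expMeasure 1] / (n * ε ^ 2) := by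
  have := isProbabilityMeasure_expMeasure one_pos
  have hn' : (0 : ℝ) < n := by exact_mod_cast hn
  have hcoord (i : Fin n) : MemLp (fun x : Fin n → ℝ => x i) 2 (iidExp n 1) :=
    memLp_two_id_expMeasure_one.comp_measurePreserving (measurePreserving_eval _ i)
  have hmem : MemLp (fun x : Fin n → ℝ => ∑ i, x i) 2 (iidExp n 1) :=
    memLp_finsetSum _ fun i _ => hcoord i
  have hmean : ∫ x, ∑ i, x i ∂iidExp n 1 = n := by
    rw [integral_finsetSum _ fun i _ => (hcoord i).integrable one_le_two]
    have hi (i : Fin n) : ∫ x, x i ∂iidExp n 1 = 1 := by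
      refine Eq.trans ?_ integral_id_expMeasure_one
      exact integral_comp_eval (μ := fun _ : Fin n => expMeasure 1) (i := i)
        (f := fun x : ℝ => x) (by fun_prop)
    simp [hi]
  have hvar : Var[fun x => ∑ i, x i; iidExp n 1] = n * Var[fun x => x; expMeasure 1] := by
    have h := variance_sum_pi (μ := fun _ : Fin n => expMeasure 1) (X := fun _ x => x)
      fun _ => memLp_two_id_expMeasure_one
    simp only [Finset.sum_const, Finset.card_univ, Fintype.card_fin, nsmul_eq_mul] at h
    rw [← h, iidExp]
    congr 1
    ext x
    simp
  have hcheb := meas_ge_le_variance_div_sq hmem (mul_pos hn' hε)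
  rw [hmean, hvar] at hcheb
  have hset : {x : Fin n → ℝ | ε ≤ |sampleMean x - 1|} =
      {x | (n : ℝ) * ε ≤ |∑ i, x i - (n : ℝ)|} := by
    ext x
    have hx : sampleMean x - 1 = (∑ i, x i - n) / n := by
      rw [sampleMean]; field_simp
    rw [Set.mem_ofPred_eq, Set.mem_ofPred_eq, hx, abs_div, abs_of_pos hn', le_div_iff₀ hn',
      mul_comm]
  rw [hset]
  refine (ENNReal.toReal_mono ENNReal.ofReal_ne_top hcheb).trans_eq ?_
  rw [ENNReal.toReal_ofReal (by have := variance_nonneg (fun x => x) (expMeasure 1); positivity)]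
  field_simp

lemma le_sampleMax {n : ℕ} (x : Fin n → ℝ) (i : Fin n) : x i ≤ sampleMax x :=
  le_ciSup (Set.finite_range x).bddAbove i

lemma sampleMax_le_iff {n : ℕ} (hn : 0 < n) (x : Fin n → ℝ) (a : ℝ) :
    sampleMax x ≤ a ↔ ∀ i, x i ≤ a := by
  have : Nonempty (Fin n) := ⟨⟨0, hn⟩⟩
  exact ciSup_le_iff (Set.finite_range x).bddAbove

lemma sampleMean_le_sampleMax {n : ℕ} (hn : 0 < n) (x : Fin n → ℝ) :
    sampleMean x ≤ sampleMax x := by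
  rw [sampleMean, div_le_iff₀ (by exact_mod_cast hn)]
  refine (Finset.sum_le_sum fun i _ => le_sampleMax x i).trans_eq ?_
  simp [mul_comm]

/-- The events `τ_n ≤ c` and `1 / c ≤ X_(n)` are comparable up to a fluctuation of the empirical
mean. -/
lemma iidExp_one_real_tau_le_bounds {n : ℕ} (hn : 0 < n) {c ε : ℝ} (hc : 0 < c) (hε : ε ≤ 1) :
    1 - (iidExp n 1).real {x | ∀ i, x i ≤ (1 + ε) / c}
        - (iidExp n 1).real {x | ε ≤ |sampleMean x - 1|} ≤ (iidExp n 1).real {x | tau x ≤ c} ∧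
      (iidExp n 1).real {x | tau x ≤ c} ≤
        1 - (iidExp n 1).real {x | ∀ i, x i ≤ (1 - ε) / c}
          + (iidExp n 1).real {x | ε ≤ |sampleMean x - 1|} := by
  have hmeas (a : ℝ) : MeasurableSet {x : Fin n → ℝ | ∀ i, x i ≤ a} := by
    simp only [Set.ofPred_forall]
    exact MeasurableSet.iInter fun i => measurableSet_le (by fun_prop) measurable_const
  have hiff {x : Fin n → ℝ} (hx : |sampleMean x - 1| < ε) :
      tau x ≤ c ↔ sampleMean x / c ≤ sampleMax x := by
    have hpos : 0 < sampleMax x :=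
      lt_of_lt_of_le (by linarith [(abs_lt.1 hx).1]) (sampleMean_le_sampleMax hn x)
    rw [tau, div_le_iff₀ hpos, div_le_iff₀ hc, mul_comm]
  rw [← probReal_compl_eq_one_sub (hmeas _), ← probReal_compl_eq_one_sub (hmeas _)]
  constructor
  · rw [sub_le_iff_le_add]
    refine (measureReal_mono fun x hx => ?_).trans (measureReal_union_le _ _)
    by_cases hB : ε ≤ |sampleMean x - 1|
    · exact Or.inr hB
    left
    rw [not_le] at hB
    rw [Set.mem_compl_iff, Set.mem_ofPred_eq, ← sampleMax_le_iff hn, not_le] at hx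
    refine (hiff hB).2 (le_trans ?_ hx.le)
    gcongr
    linarith [(abs_lt.1 hB).2]
  · refine (measureReal_mono fun x hx => ?_).trans (measureReal_union_le _ _)
    by_cases hB : ε ≤ |sampleMean x - 1|
    · exact Or.inr hB
    left
    rw [not_le] at hB
    rw [Set.mem_compl_iff, Set.mem_ofPred_eq, ← sampleMax_le_iff hn, not_le]
    refine lt_of_lt_of_le ?_ ((hiff hB).1 hx)
    gcongr
    linarith [(abs_lt.1 hB).1]

/-- The maximum of `n` exponential variables, centred by `log n`, is asymptotically Gumbel. -/
lemma tendsto_iidExp_one_real_forall_le {a : ℕ → ℝ} {s : ℝ}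
    (ha : Tendsto (fun n => a n - Real.log n) atTop (nhds s)) :
    Tendsto (fun n => (iidExp n 1).real {x | ∀ i, x i ≤ a n}) atTop
      (nhds (Real.exp (-Real.exp (-s)))) := by
  have hlog : Tendsto (fun n : ℕ => Real.log n) atTop atTop :=
    Real.tendsto_log_atTop.comp tendsto_natCast_atTop_atTop
  have hpos : ∀ᶠ n in atTop, 0 ≤ a n := by
    have := hlog.atTop_add ha
    simp only [add_sub_cancel] at this
    exact this.eventually_ge_atTop 0
  have hlim : Tendsto (fun n : ℕ => n * -Real.exp (-a n)) atTop (nhds (-Real.exp (-s))) := by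
    refine ((Real.continuous_exp.tendsto _).comp ha.neg).neg.congr' ?_
    filter_upwards [eventually_gt_atTop 0] with n hn
    have hn' : (0 : ℝ) < n := by exact_mod_cast hn
    rw [Function.comp_apply, neg_sub, sub_eq_add_neg, Real.exp_add, Real.exp_log hn']
    ring
  refine (Real.tendsto_one_add_pow_exp_of_tendsto hlim).congr' ?_
  filter_upwards [hpos] with n hn
  rw [iidExp_one_real_forall_le n hn, sub_eq_add_neg]

/-- The threshold `(1 + k / (log n)²) / (1 / log n + t / (log n)²)` is `log n - t + o(1)`. -/
lemma tendsto_threshold_sub_log (t k : ℝ) :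
    Tendsto (fun n : ℕ => (1 + k / Real.log n ^ 2) / (1 / Real.log n + t / Real.log n ^ 2)
      - Real.log n) atTop (nhds (-t)) := by
  have hlog : Tendsto (fun n : ℕ => Real.log n) atTop atTop :=
    Real.tendsto_log_atTop.comp tendsto_natCast_atTop_atTop
  suffices h : Tendsto (fun L : ℝ => (1 + k / L ^ 2) / (1 / L + t / L ^ 2) - L) atTop
      (nhds (-t)) from h.comp hlog
  have hlin : Tendsto (fun L : ℝ => (k + t ^ 2) / (L + t)) atTop (nhds 0) :=
    (tendsto_atTop_add_const_right _ _ tendsto_id).const_div_atTop _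
  have := (tendsto_const_nhds (x := -t)).add hlin
  rw [add_zero] at this
  refine this.congr' ?_
  filter_upwards [eventually_gt_atTop 0, eventually_gt_atTop (-t)] with L hL hLt
  have hLt' : L + t ≠ 0 := by linarith
  have hden : 1 / L + t / L ^ 2 = (L + t) / L ^ 2 := by field_simp
  rw [hden]
  field_simp
  ring

/-- For an i.i.d. `Exponential(1)` sample, `(log n)²·(τ_n − 1/log n)` converges in
distribution to `−G`, with `G` standard Gumbel: for every `t`,
`P((log n)²·(τ_n − 1/log n) ≤ t) → 1 − exp(−e^t)`. -/
theorem tau_asymptotics_exponential :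
    ∀ t : ℝ,
      Tendsto
        (fun n : ℕ =>
          iidExp n 1 {x | (Real.log n) ^ 2 * (tau x - 1 / Real.log n) ≤ t})
        atTop
        (nhds (ENNReal.ofReal (1 - Real.exp (-Real.exp t)))) := by
  intro t
  have hlog : Tendsto (fun n : ℕ => Real.log n) atTop atTop :=
    Real.tendsto_log_atTop.comp tendsto_natCast_atTop_atTop
  have hdev : Tendsto (fun n : ℕ => (iidExp n 1).real
      {x | 1 / Real.log n ^ 2 ≤ |sampleMean x - 1|}) atTop (nhds 0) := by
    have hbound : Tendsto (fun n : ℕ =>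
        Var[fun x => x; expMeasure 1] * (Real.log n ^ 4 / n)) atTop (nhds 0) := by
      have h := (Real.isLittleO_pow_log_id_atTop (n := 4)).tendsto_div_nhds_zero.comp
        tendsto_natCast_atTop_atTop
      simpa using h.const_mul (Var[fun x => x; expMeasure 1])
    refine squeeze_zero' (.of_forall fun _ => measureReal_nonneg) ?_ hbound
    filter_upwards [eventually_gt_atTop 0, hlog.eventually_gt_atTop 0] with n hn hL
    refine (iidExp_one_real_le_abs_sampleMean_sub_one hn (by positivity)).trans_eq ?_
    field_simp
  have hupper := tendsto_iidExp_one_real_forall_le (tendsto_threshold_sub_log t 1)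
  have hlower := tendsto_iidExp_one_real_forall_le (tendsto_threshold_sub_log t (-1))
  rw [neg_neg] at hupper hlower
  have hreal : Tendsto (fun n : ℕ => (iidExp n 1).real
      {x | tau x ≤ 1 / Real.log n + t / Real.log n ^ 2}) atTop
      (nhds (1 - Real.exp (-Real.exp t))) := by
    have hl := (hupper.const_sub 1).sub hdev
    have hu := (hlower.const_sub 1).add hdev
    rw [sub_zero] at hl
    rw [add_zero] at hu
    have hbounds : ∀ᶠ n : ℕ in atTop, 0 < n ∧ 0 < 1 / Real.log n + t / Real.log n ^ 2 ∧
        1 / Real.log n ^ 2 ≤ 1 := by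
      filter_upwards [eventually_gt_atTop 0, hlog.eventually_ge_atTop 1,
        hlog.eventually_gt_atTop (-t)] with n hn hL hLt
      have hden : 1 / Real.log n + t / Real.log n ^ 2 =
          (Real.log n + t) / Real.log n ^ 2 := by field_simp
      refine ⟨hn, ?_, div_le_one_of_le₀ (one_le_pow₀ hL) (by positivity)⟩
      rw [hden]
      have : 0 < Real.log n + t := by linarith
      positivity
    refine tendsto_of_tendsto_of_tendsto_of_le_of_le' hl hu ?_ ?_
    · filter_upwards [hbounds] with n ⟨hn, hc, hε⟩
      exact (iidExp_one_real_tau_le_bounds hn hc hε).1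
    · filter_upwards [hbounds] with n ⟨hn, hc, hε⟩
      simpa only [neg_div, ← sub_eq_add_neg] using (iidExp_one_real_tau_le_bounds hn hc hε).2
  refine (ENNReal.tendsto_ofReal hreal).congr' ?_
  filter_upwards [hlog.eventually_gt_atTop 0] with n hL
  rw [ofReal_measureReal]
  congr 1
  ext x
  rw [Set.mem_ofPred_eq, Set.mem_ofPred_eq, ← le_div_iff₀' (by positivity), sub_le_iff_le_add']
end
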